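/- arXiv:2308.08462 — 2 statements merged into one kernel-verified Lean document; each statement's English description precedes it below -/
import Mathlib

section
/- Let ι be a finite index type, E : ι → ℝ, δ > 0, and let W be a complex matrix indexed by ι such that: (a) |E(i) − E(j)| ≥ δ whenever i ≠ j and W_{ij} ≠ 0; (b) for every i and all distinct j, j′ both different from i with W_{ij} ≠ 0 and W_{ij′} ≠ 0, one has |E(j) − E(j′)| ≥ δ. Define the matrix A by A_{ij} = W_{ij}/(E(i) − E(j)) if i ≠ j and E(i) ≠ E(j), and A_{ij} = 0 otherwise. Then ‖A‖ ≤ (π/√3)·‖W‖/δ; in particular ‖A‖ ≤ 2‖W‖/δ. -/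
/-- The ℓ² → ℓ² operator norm of a complex square matrix. -/
noncomputable def opNorm {ι : Type*} [Fintype ι] [DecidableEq ι] (A : Matrix ι ι ℂ) : ℝ :=
  ‖Matrix.toEuclideanCLM (𝕜 := ℂ) A‖

/-!
`A` is the Hadamard product of `W` with the matrix of inverse energy gaps, cut off to the support of
`W`. Schur's inequality bounds the norm of a Hadamard product by the largest column norm of one
factor times the largest row norm of the other. The columns of `W` have norm at most `‖W‖`. In each
row, the gaps of either sign are `δ`-separated and at least `δ` in absolute value, so at worst they
are `δ, 2δ, 3δ, …`, and the row of inverse gaps has square norm at most `2 ζ(2) / δ ^ 2`.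
-/

section Separated

variable {α : Type*}

theorem injOn_floor_of_separated {R : Type*} [Ring R] [LinearOrder R] [IsStrictOrderedRing R]
    [FloorRing R] {s : Set α} {x : α → R} (hsep : s.Pairwise fun j k => 1 ≤ |x j - x k|) :
    s.InjOn fun j => ⌊x j⌋ := fun _ hj _ hk hjk =>
  hsep.eq hj hk (Int.abs_sub_lt_one_of_floor_eq_floor hjk).not_ge

theorem injOn_natFloor_div_of_separated {K : Type*} [Field K] [LinearOrder K]
    [IsStrictOrderedRing K] [FloorRing K] {s : Set α} {x : α → K} {a δ : K} (hδ : 0 < δ)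
    (hx : ∀ j ∈ s, a ≤ x j) (hsep : s.Pairwise fun j k => δ ≤ |x j - x k|) :
    s.InjOn fun j => ⌊(x j - a) / δ⌋₊ := by
  intro j hj k hk hjk
  have hnonneg : ∀ j ∈ s, 0 ≤ (x j - a) / δ := fun j hj =>
    div_nonneg (sub_nonneg.2 (hx j hj)) hδ.le
  have hunit : s.Pairwise fun j k => 1 ≤ |(x j - a) / δ - (x k - a) / δ| :=
    hsep.imp fun j k h => by
      rwa [← sub_div, sub_sub_sub_cancel_right, abs_div, abs_of_pos hδ, one_le_div hδ]
  refine injOn_floor_of_separated hunit hj hk ?_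
  dsimp only at hjk ⊢
  rw [← Int.natCast_floor_eq_floor (hnonneg j hj), hjk, Int.natCast_floor_eq_floor (hnonneg k hk)]

variable {f : ℝ → ℝ} {a δ S : ℝ} {s : Finset α} {x : α → ℝ}

theorem sum_le_of_antitoneOn_of_separated (hδ : 0 < δ) (hf : AntitoneOn f (Set.Ici a))
    (hf_nonneg : ∀ n : ℕ, 0 ≤ f (a + n * δ)) (hS : HasSum (fun n : ℕ => f (a + n * δ)) S)
    (hx : ∀ j ∈ s, a ≤ x j) (hsep : (s : Set α).Pairwise fun j k => δ ≤ |x j - x k|) :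
    ∑ j ∈ s, f (x j) ≤ S := by
  have hfloor : ∀ j ∈ s, f (x j) ≤ f (a + ⌊(x j - a) / δ⌋₊ * δ) := fun j hj => by
    have hle : (⌊(x j - a) / δ⌋₊ : ℝ) * δ ≤ x j - a :=
      (le_div_iff₀ hδ).1 (Nat.floor_le (div_nonneg (sub_nonneg.2 (hx j hj)) hδ.le))
    exact hf (Set.mem_Ici.2 (le_add_of_nonneg_right (by positivity))) (hx j hj) (by linarith)
  calc ∑ j ∈ s, f (x j) ≤ ∑ j ∈ s, f (a + ⌊(x j - a) / δ⌋₊ * δ) := Finset.sum_le_sum hfloor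
    _ = ∑ n ∈ s.image fun j => ⌊(x j - a) / δ⌋₊, f (a + n * δ) :=
      (Finset.sum_image (f := fun n : ℕ => f (a + n * δ))
        (injOn_natFloor_div_of_separated hδ hx hsep)).symm
    _ ≤ S := sum_le_hasSum _ (fun n _ => hf_nonneg n) hS

theorem sum_comp_abs_le_of_antitoneOn_of_separated (hδ : 0 < δ) (hf : AntitoneOn f (Set.Ici a))
    (hf_nonneg : ∀ n : ℕ, 0 ≤ f (a + n * δ)) (hS : HasSum (fun n : ℕ => f (a + n * δ)) S)
    (hx : ∀ j ∈ s, a ≤ |x j|) (hsep : (s : Set α).Pairwise fun j k => δ ≤ |x j - x k|) :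
    ∑ j ∈ s, f |x j| ≤ 2 * S := by
  have hsign : ∀ t ⊆ s, (∀ j ∈ t, ∀ k ∈ t, |(|x j| - |x k|)| = |x j - x k|) →
      ∑ j ∈ t, f |x j| ≤ S := fun t hts ht =>
    sum_le_of_antitoneOn_of_separated hδ hf hf_nonneg hS (fun j hj => hx j (hts hj))
      fun j hj k hk hjk => (hsep (hts hj) (hts hk) hjk).trans_eq (ht j hj k hk).symm
  have hnonneg : ∑ j ∈ s with 0 ≤ x j, f |x j| ≤ S :=
    hsign _ (Finset.filter_subset _ s) fun j hj k hk => by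
      rw [abs_of_nonneg (Finset.mem_filter.1 hj).2, abs_of_nonneg (Finset.mem_filter.1 hk).2]
  have hneg : ∑ j ∈ s with ¬0 ≤ x j, f |x j| ≤ S :=
    hsign _ (Finset.filter_subset _ s) fun j hj k hk => by
      rw [abs_of_neg (not_le.1 (Finset.mem_filter.1 hj).2),
        abs_of_neg (not_le.1 (Finset.mem_filter.1 hk).2), neg_sub_neg, abs_sub_comm]
  rw [← Finset.sum_filter_add_sum_filter_not s fun j => 0 ≤ x j]
  linarith

theorem hasSum_inv_sq_arithmetic (δ : ℝ) :
    HasSum (fun n : ℕ => ((δ + n * δ) ^ 2)⁻¹) (Real.pi ^ 2 / 6 / δ ^ 2) := by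
  have hshift : HasSum (fun n : ℕ => 1 / ((n + 1 : ℕ) : ℝ) ^ 2) (Real.pi ^ 2 / 6) := by
    simpa using (hasSum_nat_add_iff' 1).2 hasSum_zeta_two
  refine (hshift.div_const (δ ^ 2)).congr_fun fun n => ?_
  rw [Nat.cast_succ, div_div, one_div, ← mul_pow, add_one_mul, add_comm]

theorem sum_inv_sq_le_of_separated (hδ : 0 < δ) (hx : ∀ j ∈ s, δ ≤ |x j|)
    (hsep : (s : Set α).Pairwise fun j k => δ ≤ |x j - x k|) :
    ∑ j ∈ s, (x j ^ 2)⁻¹ ≤ Real.pi ^ 2 / 3 / δ ^ 2 := by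
  have hanti : AntitoneOn (fun y : ℝ => (y ^ 2)⁻¹) (Set.Ici δ) := fun y hy z _ hyz => by
    have hy_pos : 0 < y := hδ.trans_le hy
    dsimp only
    gcongr
  calc ∑ j ∈ s, (x j ^ 2)⁻¹ = ∑ j ∈ s, (|x j| ^ 2)⁻¹ := by simp_rw [sq_abs]
    _ ≤ 2 * (Real.pi ^ 2 / 6 / δ ^ 2) :=
      sum_comp_abs_le_of_antitoneOn_of_separated hδ hanti (fun n => by positivity)
        (hasSum_inv_sq_arithmetic δ) hx hsep
    _ = Real.pi ^ 2 / 3 / δ ^ 2 := by ring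

end Separated

section Hadamard

open scoped Matrix Matrix.Norms.L2Operator

variable {m n : Type*} [Fintype n]

theorem norm_sq_hadamard_mulVec_apply_le {R : Type*} [NonUnitalSeminormedRing R]
    (B C : Matrix m n R) (u : n → R) (i : m) :
    ‖((B ⊙ C) *ᵥ u) i‖ ^ 2 ≤ (∑ j, ‖C i j‖ ^ 2) * ∑ j, ‖B i j‖ ^ 2 * ‖u j‖ ^ 2 := by
  have hnorm : ‖((B ⊙ C) *ᵥ u) i‖ ≤ ∑ j, ‖C i j‖ * (‖B i j‖ * ‖u j‖) :=
    norm_sum_le_of_le _ fun j _ => by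
      calc ‖B i j * C i j * u j‖ ≤ ‖B i j‖ * ‖C i j‖ * ‖u j‖ := norm_mul₃_le
        _ = ‖C i j‖ * (‖B i j‖ * ‖u j‖) := by ring
  calc ‖((B ⊙ C) *ᵥ u) i‖ ^ 2 ≤ (∑ j, ‖C i j‖ * (‖B i j‖ * ‖u j‖)) ^ 2 := by gcongr
    _ ≤ (∑ j, ‖C i j‖ ^ 2) * ∑ j, (‖B i j‖ * ‖u j‖) ^ 2 := Finset.sum_mul_sq_le_sq_mul_sq _ _ _
    _ = (∑ j, ‖C i j‖ ^ 2) * ∑ j, ‖B i j‖ ^ 2 * ‖u j‖ ^ 2 := by simp_rw [mul_pow]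

variable [Fintype m] [DecidableEq n] {𝕜 : Type*} [RCLike 𝕜]

theorem sum_norm_sq_col_le_l2_opNorm_sq (B : Matrix m n 𝕜) (j : n) :
    ∑ i, ‖B i j‖ ^ 2 ≤ ‖B‖ ^ 2 := by
  have h := B.l2_opNorm_mulVec (EuclideanSpace.single j 1)
  rw [PiLp.norm_single, norm_one, mul_one] at h
  simpa [EuclideanSpace.norm_sq_eq] using pow_le_pow_left₀ (norm_nonneg _) h 2

theorem l2_opNorm_hadamard_le {B C : Matrix m n 𝕜} {b c : ℝ} (hb : 0 ≤ b) (hc : 0 ≤ c)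
    (hB : ∀ j, ∑ i, ‖B i j‖ ^ 2 ≤ b ^ 2) (hC : ∀ i, ∑ j, ‖C i j‖ ^ 2 ≤ c ^ 2) :
    ‖B ⊙ C‖ ≤ c * b := by
  rw [Matrix.l2_opNorm_def]
  refine ContinuousLinearMap.opNorm_le_bound _ (by positivity) fun u => ?_
  refine le_of_sq_le_sq ?_ (by positivity)
  rw [EuclideanSpace.norm_sq_eq, mul_pow, EuclideanSpace.norm_sq_eq u]
  calc ∑ i, ‖((B ⊙ C) *ᵥ u) i‖ ^ 2
      ≤ ∑ i, (∑ j, ‖C i j‖ ^ 2) * ∑ j, ‖B i j‖ ^ 2 * ‖u j‖ ^ 2 :=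
        Finset.sum_le_sum fun i _ => norm_sq_hadamard_mulVec_apply_le B C u i
    _ ≤ ∑ i, c ^ 2 * ∑ j, ‖B i j‖ ^ 2 * ‖u j‖ ^ 2 := by gcongr with i; exact hC i
    _ = c ^ 2 * ∑ j, (∑ i, ‖B i j‖ ^ 2) * ‖u j‖ ^ 2 := by
        rw [← Finset.mul_sum, Finset.sum_comm]
        simp_rw [Finset.sum_mul]
    _ ≤ c ^ 2 * ∑ j, b ^ 2 * ‖u j‖ ^ 2 := by gcongr with j; exact hB j
    _ = (c * b) ^ 2 * ∑ j, ‖u j‖ ^ 2 := by rw [← Finset.mul_sum]; ring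

end Hadamard

section Generator

open scoped Matrix Matrix.Norms.L2Operator

variable {m n 𝕜 : Type*} [RCLike 𝕜] {E : m → ℝ} {F : n → ℝ} {W : Matrix m n 𝕜} {δ : ℝ}

open Classical in
/-- The inverse energy gaps between the levels `E` and `F`, cut off to the entries where `W` couples
distinct levels: a full row of inverse gaps has no square norm bound in terms of `δ`. -/
noncomputable def inverseGaps (E : m → ℝ) (F : n → ℝ) (W : Matrix m n 𝕜) : Matrix m n 𝕜 :=
  Matrix.of fun i j => if E i ≠ F j ∧ W i j ≠ 0 then ((E i : 𝕜) - (F j : 𝕜))⁻¹ else 0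

theorem hadamard_inverseGaps_apply (i : m) (j : n) :
    (W ⊙ inverseGaps E F W) i j =
      if E i ≠ F j then W i j / ((E i : 𝕜) - (F j : 𝕜)) else 0 := by
  by_cases hE : E i = F j <;> by_cases hW : W i j = 0 <;>
    simp [inverseGaps, hE, hW, div_eq_mul_inv]

theorem sum_norm_sq_inverseGaps_le [Fintype n] (hδ : 0 < δ) {i : m}
    (hgap : ∀ j, E i ≠ F j → W i j ≠ 0 → δ ≤ |E i - F j|)
    (hsep : ∀ j k, j ≠ k → E i ≠ F j → E i ≠ F k → W i j ≠ 0 → W i k ≠ 0 → δ ≤ |F j - F k|) :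
    ∑ j, ‖inverseGaps E F W i j‖ ^ 2 ≤ (Real.pi / Real.sqrt 3 / δ) ^ 2 := by
  classical
  have hentry : ∀ j, ‖inverseGaps E F W i j‖ ^ 2 =
      if E i ≠ F j ∧ W i j ≠ 0 then ((E i - F j) ^ 2)⁻¹ else 0 := fun j => by
    rw [inverseGaps, Matrix.of_apply]
    split_ifs
    · rw [← RCLike.ofReal_sub, norm_inv, RCLike.norm_ofReal, inv_pow, sq_abs]
    · simp
  calc ∑ j, ‖inverseGaps E F W i j‖ ^ 2
      = ∑ j with E i ≠ F j ∧ W i j ≠ 0, ((E i - F j) ^ 2)⁻¹ := by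
        simp_rw [hentry, Finset.sum_filter]
    _ ≤ Real.pi ^ 2 / 3 / δ ^ 2 := by
        refine sum_inv_sq_le_of_separated hδ (fun j hj => ?_) fun j hj k hk hjk => ?_
        · obtain ⟨hEj, hWj⟩ := (Finset.mem_filter.1 hj).2
          exact hgap j hEj hWj
        · obtain ⟨hEj, hWj⟩ := (Finset.mem_filter.1 hj).2
          obtain ⟨hEk, hWk⟩ := (Finset.mem_filter.1 hk).2
          rw [sub_sub_sub_cancel_left]
          exact hsep k j hjk.symm hEk hEj hWk hWj
    _ = (Real.pi / Real.sqrt 3 / δ) ^ 2 := by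
        rw [div_pow, div_pow, Real.sq_sqrt zero_le_three]

theorem pi_div_sqrt_three_le_two : Real.pi / Real.sqrt 3 ≤ 2 := by
  rw [div_le_iff₀ (by positivity)]
  refine le_of_sq_le_sq ?_ (by positivity)
  rw [mul_pow, Real.sq_sqrt zero_le_three]
  nlinarith [Real.pi_pos, Real.pi_lt_d2]

theorem generator_opNorm_le_general [Fintype m] [Fintype n] [DecidableEq n] (hδ : 0 < δ)
    (hgap : ∀ i j, E i ≠ F j → W i j ≠ 0 → δ ≤ |E i - F j|)
    (hsep : ∀ i j k, j ≠ k → E i ≠ F j → E i ≠ F k → W i j ≠ 0 → W i k ≠ 0 → δ ≤ |F j - F k|)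
    {A : Matrix m n 𝕜}
    (hA : ∀ i j, A i j = if E i ≠ F j then W i j / ((E i : 𝕜) - (F j : 𝕜)) else 0) :
    ‖A‖ ≤ (Real.pi / Real.sqrt 3) * ‖W‖ / δ ∧ ‖A‖ ≤ 2 * ‖W‖ / δ := by
  have hA_eq : A = W ⊙ inverseGaps E F W := by
    ext i j
    rw [hA, hadamard_inverseGaps_apply]
  have hbound : ‖A‖ ≤ (Real.pi / Real.sqrt 3) * ‖W‖ / δ := by
    rw [hA_eq, ← div_mul_eq_mul_div]
    exact l2_opNorm_hadamard_le (norm_nonneg W) (by positivity)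
      (sum_norm_sq_col_le_l2_opNorm_sq W)
      fun i => sum_norm_sq_inverseGaps_le hδ (hgap i) (hsep i)
  refine ⟨hbound, hbound.trans ?_⟩
  gcongr
  exact pi_div_sqrt_three_le_two

end Generator

/-- Bound on the generator `A` with entries `W_{ij}/(E(i)−E(j))` under δ-separation of the
energies appearing in each row of `W`. -/
theorem generator_opNorm_le {ι : Type*} [Fintype ι] [DecidableEq ι]
    (E : ι → ℝ) (δ : ℝ) (hδ : 0 < δ) (W : Matrix ι ι ℂ)
    (ha : ∀ i j, i ≠ j → W i j ≠ 0 → δ ≤ |E i - E j|)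
    (hb : ∀ i j j', j ≠ j' → j ≠ i → j' ≠ i → W i j ≠ 0 → W i j' ≠ 0 → δ ≤ |E j - E j'|)
    (A : Matrix ι ι ℂ)
    (hA : ∀ i j, A i j =
      if i ≠ j ∧ E i ≠ E j then W i j / (((E i : ℝ) : ℂ) - ((E j : ℝ) : ℂ)) else 0) :
    opNorm A ≤ (Real.pi / Real.sqrt 3) * opNorm W / δ ∧ opNorm A ≤ 2 * opNorm W / δ := by
  refine generator_opNorm_le_general hδ (fun i j hE => ha i j (ne_of_apply_ne E hE))
    (fun i j k hjk hj hk => hb i j k hjk (ne_of_apply_ne E hj.symm) (ne_of_apply_ne E hk.symm))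
    fun i j => (hA i j).trans (if_congr (and_iff_right_of_imp (ne_of_apply_ne E)) rfl rfl)
end

section
/- Let (T_α)_{α∈A} be a finite family of pairwise disjoint nonempty finite intervals in ℤ, let κ > 0 and i ∈ ℤ. Then Σ_α e^{−κ·dist(i,T_α)} ≤ 2/(1 − e^{−κ}). -/
/-- The distance from a point `i ∈ ℤ` to a (nonempty) finite set `T ⊂ ℤ`. -/
noncomputable def distToSet (i : ℤ) (T : Finset ℤ) : ℝ :=
  sInf ((fun j : ℤ => |(i : ℝ) - (j : ℝ)|) '' ↑T)

/-!
Pick in each `T α` a point nearest to `i`. Disjointness makes these points distinct, so the sum is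
dominated by `∑ j : ℤ, e^{-κ |i - j|} = (1 + e^{-κ}) / (1 - e^{-κ})`.
-/

lemma distToSet_eq_infDist (i : ℤ) (T : Finset ℤ) :
    distToSet i T = Metric.infDist i (T : Set ℤ) := by
  simp only [distToSet, sInf_image', Metric.infDist_eq_iInf, Int.dist_eq]

lemma exists_injective_infDist_eq_dist {X A : Type*} [PseudoMetricSpace X] [ProperSpace X]
    {T : A → Set X} (hclosed : ∀ α, IsClosed (T α)) (hne : ∀ α, (T α).Nonempty)
    (hdisj : Pairwise (Function.onFun Disjoint T)) (x : X) :
    ∃ y : A → X, Function.Injective y ∧ ∀ α, Metric.infDist x (T α) = dist x (y α) := by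
  choose y hyT hy using fun α => (hclosed α).exists_infDist_eq_dist (hne α) x
  exact ⟨y, fun α β h => hdisj.eq (Set.not_disjoint_iff.mpr ⟨y α, hyT α, h ▸ hyT β⟩), hy⟩

lemma hasSum_pow_natAbs {K : Type*} [NormedDivisionRing K] {r : K} (hr : ‖r‖ < 1) :
    HasSum (fun k : ℤ => r ^ k.natAbs) ((1 + r) / (1 - r)) := by
  have hgeom : HasSum (fun n : ℕ => r ^ n) (1 - r)⁻¹ := hasSum_geometric_of_norm_lt_one hr
  have hneg : HasSum (fun n : ℕ => r ^ (n + 1)) (r * (1 - r)⁻¹) := by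
    simpa only [pow_succ'] using hgeom.mul_left r
  rw [div_eq_mul_inv, add_mul, one_mul]
  exact HasSum.of_nat_of_neg_add_one hgeom (by convert hneg using 3; omega)

lemma hasSum_exp_neg_mul_dist {κ : ℝ} (hκ : 0 < κ) (i : ℤ) :
    HasSum (fun j : ℤ => Real.exp (-κ * dist i j))
      ((1 + Real.exp (-κ)) / (1 - Real.exp (-κ))) := by
  have hr : ‖Real.exp (-κ)‖ < 1 := by simpa using hκ
  have hterm (j : ℤ) : Real.exp (-κ * dist i j) = Real.exp (-κ) ^ (i - j).natAbs := by
    rw [← Real.exp_nat_mul, mul_comm, Nat.cast_natAbs, Int.cast_abs, Int.cast_sub, Int.dist_eq]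
  simpa only [hterm, Function.comp_def, Equiv.subLeft_apply] using
    (Equiv.subLeft i).hasSum_iff.mpr (hasSum_pow_natAbs hr)

theorem sum_exp_dist_le_general {A : Type*} {T : A → Set ℤ} (hne : ∀ α, (T α).Nonempty)
    (hdisj : Pairwise (Function.onFun Disjoint T)) {κ : ℝ} (hκ : 0 < κ) (i : ℤ) :
    Summable (fun α => Real.exp (-κ * Metric.infDist i (T α))) ∧
      ∑' α, Real.exp (-κ * Metric.infDist i (T α)) ≤
        (1 + Real.exp (-κ)) / (1 - Real.exp (-κ)) := by
  obtain ⟨j, hj, hdist⟩ :=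
    exists_injective_infDist_eq_dist (fun α => isClosed_discrete (T α)) hne hdisj i
  have hsum := hasSum_exp_neg_mul_dist hκ i
  simp only [hdist]
  refine ⟨hsum.summable.comp_injective hj, ?_⟩
  rw [← hsum.tsum_eq]
  exact tsum_comp_le_tsum_of_inj hsum.summable (fun _ => (Real.exp_pos _).le) hj

/-- For a pairwise disjoint family of nonempty finite intervals in `ℤ`,
`Σ_α e^{−κ·dist(i,T_α)} ≤ 2/(1−e^{−κ})`. -/
theorem sum_exp_dist_le {A : Type*} [Fintype A] (T : A → Finset ℤ)
    (hne : ∀ α, (T α).Nonempty) (hint : ∀ α, ∃ a b : ℤ, T α = Finset.Icc a b)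
    (hdisj : ∀ α α', α ≠ α' → Disjoint (T α) (T α'))
    (κ : ℝ) (hκ : 0 < κ) (i : ℤ) :
    ∑ α, Real.exp (-κ * distToSet i (T α)) ≤ 2 / (1 - Real.exp (-κ)) := by
  have hr : Real.exp (-κ) < 1 := Real.exp_lt_one_iff.mpr (neg_lt_zero.mpr hκ)
  simp only [distToSet_eq_infDist, ← tsum_fintype (L := .unconditional A)]
  exact (sum_exp_dist_le_general hne (fun α β h => Finset.disjoint_coe.mpr (hdisj α β h)) hκ i).2
    |>.trans (div_le_div_of_nonneg_right (by linarith) (by linarith))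
end
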